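/- arXiv:1911.12822 — 2 statements merged into one kernel-verified Lean document; each statement's English description precedes it below -/
import Mathlib

section
/- Fix n ≥ 2. For 0 < ρ < σ < ∞, v ∈ L¹(B_σ) and s > 1, define J(ρ,σ,v) := inf{ ∫_{B_σ} |v| |∇η|^s dx : η ∈ C₀¹(B_σ), η ≥ 0, η = 1 on B_ρ }. Then for every δ ∈ (0,1], J(ρ,σ,v) ≤ (σ−ρ)^{−(s−1+1/δ)} ( ∫_ρ^σ ( ∫_{S_r} |v| dH^{n−1} )^δ dr )^{1/δ}, where S_r denotes the sphere of radius r centered at the origin and the inner integral is with respect to (n−1)-dimensional surface measure. -/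
open MeasureTheory Metric Set
open scoped ENNReal NNReal Topology

noncomputable section

section

open Filter
open scoped Pointwise

/-- The gnomonic projection onto the hyperplane where the zeroth coordinate is one. -/
def gnomonic {k : ℕ} (x : EuclideanSpace ℝ (Fin (k + 1))) : Fin k → ℝ := fun i => x i.succ / x 0

/-- The cone over `T`, truncated at height `c`. -/
def truncatedCone {k : ℕ} (c : ℝ) (T : Set (Fin k → ℝ)) : Set (EuclideanSpace ℝ (Fin (k + 1))) :=
  {x | x 0 ∈ Ioo 0 c ∧ gnomonic x ∈ T}

lemma volume_truncatedCone {k : ℕ} {c : ℝ} (hc : 0 ≤ c) {T : Set (Fin k → ℝ)}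
    (hT : MeasurableSet T) :
    volume (truncatedCone c T) = ENNReal.ofReal (c ^ (k + 1) / (k + 1)) * volume T := by
  let S : Set (ℝ × (Fin k → ℝ)) := {p | p.1 ∈ Ioo 0 c ∧ p.1⁻¹ • p.2 ∈ T}
  have hS : MeasurableSet S := by
    apply MeasurableSet.inter
    · exact measurableSet_Ioo.preimage measurable_fst
    · exact hT.preimage (by fun_prop)
  have h1 := (volume_preserving_piFinSuccAbove (fun _ : Fin (k + 1) => ℝ) 0).comp
    (PiLp.volume_preserving_ofLp (Fin (k + 1)))
  have h2 : truncatedCone c T = (MeasurableEquiv.piFinSuccAbove (fun _ : Fin (k + 1) => ℝ) 0 ∘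
      @WithLp.ofLp 2 (Fin (k + 1) → ℝ)) ⁻¹' S := by
    ext x
    simp only [truncatedCone, mem_ofPred_eq, S, mem_preimage, Function.comp]
    refine and_congr Iff.rfl ?_
    apply iff_of_eq
    congr 1
    ext i
    simp [gnomonic, div_eq_inv_mul, MeasurableEquiv.piFinSuccAbove, Fin.insertNthEquiv,
      Fin.tail]
  rw [h2, h1.measure_preimage hS.nullMeasurableSet, Measure.volume_eq_prod, Measure.prod_apply hS]
  have h3 : ∀ h : ℝ, volume (Prod.mk h ⁻¹' S) =
      (Ioo 0 c).indicator (fun h => ENNReal.ofReal (h ^ k) * volume T) h := by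
    intro h
    by_cases hh : h ∈ Ioo 0 c
    · rw [indicator_of_mem hh]
      have : Prod.mk h ⁻¹' S = h • T := by
        ext y
        rw [mem_smul_set_iff_inv_smul_mem₀ hh.1.ne']
        simp [S, hh.1, hh.2]
      rw [this, Measure.addHaar_smul]
      simp [abs_of_pos (pow_pos hh.1 k)]
    · rw [indicator_of_notMem hh]
      have : Prod.mk h ⁻¹' S = ∅ := by
        ext y
        simp only [S, mem_preimage, mem_ofPred_eq, hh, false_and, mem_empty_iff_false]
      simp [this]
  simp_rw [h3]
  rw [lintegral_indicator measurableSet_Ioo, lintegral_mul_const _ (by fun_prop)]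
  congr 1
  rw [← ofReal_integral_eq_lintegral_ofReal]
  · rw [← integral_Ioc_eq_integral_Ioo, ← intervalIntegral.integral_of_le hc, integral_pow]
    simp
  · exact ((continuous_pow k).integrableOn_Icc).mono_set Ioo_subset_Icc_self
  · filter_upwards [ae_restrict_mem measurableSet_Ioo] with h hh
    exact pow_nonneg hh.1.le k

lemma lipschitz_inv_norm_smul {E : Type*} [NormedAddCommGroup E] [NormedSpace ℝ E] {x y : E}
    (hx : 1 ≤ ‖x‖) (hy : 1 ≤ ‖y‖) : ‖‖x‖⁻¹ • x - ‖y‖⁻¹ • y‖ ≤ 2 * ‖x - y‖ := by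
  have hx0 : 0 < ‖x‖ := by linarith
  have hy0 : 0 < ‖y‖ := by linarith
  have h1 : ‖x‖⁻¹ • x - ‖y‖⁻¹ • y = ‖x‖⁻¹ • ((x - y) + ((‖y‖ - ‖x‖) * ‖y‖⁻¹) • y) := by
    rw [smul_add, smul_smul, smul_sub]
    have : ‖x‖⁻¹ * ((‖y‖ - ‖x‖) * ‖y‖⁻¹) = ‖x‖⁻¹ - ‖y‖⁻¹ := by field_simp
    rw [this, sub_smul]; abel
  rw [h1, norm_smul, norm_inv, norm_norm]
  have h2 : ‖((‖y‖ - ‖x‖) * ‖y‖⁻¹) • y‖ ≤ ‖x - y‖ := by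
    rw [norm_smul, norm_mul, norm_inv, norm_norm, mul_assoc, inv_mul_cancel₀ hy0.ne', mul_one,
      norm_sub_rev x y]
    exact abs_norm_sub_norm_le y x
  have h3 : ‖x‖⁻¹ ≤ 1 := inv_le_one_of_one_le₀ hx
  calc _ ≤ 1 * (‖x - y‖ + ‖x - y‖) := by
        apply mul_le_mul h3 ((norm_add_le _ _).trans (by gcongr)) (norm_nonneg _) zero_le_one
    _ = _ := by ring

/-- The point of the hyperplane at height one above `y`. -/
def liftOne {k : ℕ} (y : Fin k → ℝ) : EuclideanSpace ℝ (Fin (k + 1)) :=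
  WithLp.toLp 2 (Fin.cons 1 y)

/-- The inverse of the gnomonic projection of the unit hemisphere. -/
def invGnomonic {k : ℕ} (y : Fin k → ℝ) : EuclideanSpace ℝ (Fin (k + 1)) :=
  ‖liftOne y‖⁻¹ • liftOne y

lemma one_le_norm_liftOne {k : ℕ} (y : Fin k → ℝ) : 1 ≤ ‖liftOne y‖ := by
  have := PiLp.norm_apply_le (liftOne y) 0
  simpa [liftOne] using this

lemma exists_lipschitzWith_invGnomonic (k : ℕ) :
    ∃ L : ℝ≥0, LipschitzWith L (invGnomonic : (Fin k → ℝ) → _) := by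
  have h1 := PiLp.lipschitzWith_toLp 2 (fun _ : Fin (k + 1) => ℝ)
  refine ⟨2 * (Fintype.card (Fin (k + 1)) : ℝ≥0) ^ (1 / (2 : ℝ≥0∞)).toReal, ?_⟩
  apply LipschitzWith.of_dist_le_mul
  intro y z
  rw [dist_eq_norm, invGnomonic, invGnomonic]
  refine (lipschitz_inv_norm_smul (one_le_norm_liftOne y) (one_le_norm_liftOne z)).trans ?_
  rw [← dist_eq_norm]
  have h2 := h1.dist_le_mul (Fin.cons 1 y) (Fin.cons 1 z)
  have h3 : dist (Fin.cons 1 y : Fin (k + 1) → ℝ) (Fin.cons 1 z) ≤ dist y z := by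
    rw [dist_pi_le_iff dist_nonneg]
    intro i
    refine Fin.cases ?_ (fun j => ?_) i
    · simp
    · simpa using dist_le_pi_dist y z j
  push_cast
  rw [mul_assoc]
  gcongr
  exact h2.trans (by push_cast; gcongr)

lemma eq_smul_invGnomonic {k : ℕ} {x : EuclideanSpace ℝ (Fin (k + 1))} (h0 : 0 < x 0) :
    x = ‖x‖ • invGnomonic (gnomonic x) := by
  have h : liftOne (gnomonic x) = (x 0)⁻¹ • x := by
    ext i
    refine Fin.cases ?_ (fun j => ?_) i
    · simp [liftOne, h0.ne']
    · simp [liftOne, gnomonic, div_eq_inv_mul]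
  have hx : 0 < ‖x‖ := norm_pos_iff.2 (by rintro rfl; simp at h0)
  rw [invGnomonic, h, norm_smul, smul_smul, smul_smul, norm_inv, Real.norm_of_nonneg h0.le]
  have : ‖x‖ * ((x 0)⁻¹ * ‖x‖)⁻¹ * (x 0)⁻¹ = 1 := by field_simp
  rw [this, one_smul]

lemma invGnomonic_gnomonic {k : ℕ} {x : EuclideanSpace ℝ (Fin (k + 1))} (hx : ‖x‖ = 1)
    (h0 : 0 < x 0) : invGnomonic (gnomonic x) = x := by
  simpa [hx] using (eq_smul_invGnomonic h0).symm

lemma measurable_gnomonic {k : ℕ} :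
    Measurable (gnomonic : EuclideanSpace ℝ (Fin (k + 1)) → _) := by
  unfold gnomonic
  fun_prop

lemma measurableSet_truncatedCone {k : ℕ} (c : ℝ) {T : Set (Fin k → ℝ)} (hT : MeasurableSet T) :
    MeasurableSet (truncatedCone c T) := by
  apply MeasurableSet.inter
  · exact measurableSet_Ioo.preimage (by fun_prop)
  · exact hT.preimage measurable_gnomonic

lemma gnomonic_smul {k : ℕ} {t : ℝ} (ht : t ≠ 0) (x : EuclideanSpace ℝ (Fin (k + 1))) :
    gnomonic (t • x) = gnomonic x := by
  ext i
  simp [gnomonic, mul_div_mul_left _ _ ht]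

lemma exists_hausdorffMeasure_le_volume_cone_of_pole (k : ℕ) :
    ∃ C : ℝ≥0, ∀ A : Set (EuclideanSpace ℝ (Fin (k + 1))), MeasurableSet A →
      A ⊆ sphere 0 1 → (∀ a ∈ A, 1 / 2 < a 0) →
      μH[(k : ℝ)] A ≤ C * volume (Ioo (0 : ℝ) 1 • A) := by
  obtain ⟨L, hL⟩ := exists_lipschitzWith_invGnomonic k
  refine ⟨L ^ k * ((1 / 2 : ℝ) ^ (k + 1) / (k + 1))⁻¹.toNNReal, fun A hA hAS hA0 => ?_⟩
  set T : Set (Fin k → ℝ) := invGnomonic ⁻¹' A with hT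
  have hTm : MeasurableSet T := hL.continuous.measurable hA
  have h1 : A ⊆ invGnomonic '' T := fun a ha => by
    have := invGnomonic_gnomonic (x := a) (by simpa using hAS ha) (by linarith [hA0 a ha])
    exact ⟨gnomonic a, by simpa [hT, this] using ha, this⟩
  have h2 : truncatedCone (1 / 2) T ⊆ Ioo (0 : ℝ) 1 • A := by
    rintro x ⟨hx0, hx⟩
    have hxe := eq_smul_invGnomonic hx0.1
    have hx' : 0 < ‖x‖ := norm_pos_iff.2 (by rintro rfl; simp at hx0)
    refine ⟨‖x‖, ⟨hx', ?_⟩, _, hx, hxe.symm⟩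
    have h4 := hA0 _ hx
    have h5 : x 0 = ‖x‖ * (invGnomonic (gnomonic x)) 0 := by
      conv_lhs => rw [hxe]
      simp
    have h6 := hx0.2
    by_contra! h7
    nlinarith
  have h3 := volume_truncatedCone (c := 1 / 2) (by norm_num) hTm
  have hpos : (0 : ℝ) < (1 / 2 : ℝ) ^ (k + 1) / (k + 1) := by positivity
  calc μH[(k : ℝ)] A ≤ μH[(k : ℝ)] (invGnomonic '' T) := measure_mono h1
    _ ≤ (L : ℝ≥0∞) ^ (k : ℝ) * μH[(k : ℝ)] T := hL.hausdorffMeasure_image_le (by positivity) T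
    _ = (L : ℝ≥0∞) ^ k * volume T := by
      have h := hausdorffMeasure_pi_real (ι := Fin k)
      rw [Fintype.card_fin] at h
      rw [h, ENNReal.rpow_natCast]
    _ = (L : ℝ≥0∞) ^ k * (ENNReal.ofReal ((1 / 2 : ℝ) ^ (k + 1) / (k + 1))⁻¹ *
          volume (truncatedCone (1 / 2) T)) := by
      rw [h3, ← mul_assoc (ENNReal.ofReal _), ← ENNReal.ofReal_mul (by positivity),
        inv_mul_cancel₀ hpos.ne']
      simp
    _ ≤ _ := by
      push_cast
      rw [mul_assoc]
      gcongr
      rfl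

lemma exists_linearIsometryEquiv_map_single {k : ℕ} {e : EuclideanSpace ℝ (Fin (k + 1))}
    (he : ‖e‖ = 1) : ∃ Φ : EuclideanSpace ℝ (Fin (k + 1)) ≃ₗᵢ[ℝ] EuclideanSpace ℝ (Fin (k + 1)),
      Φ e = EuclideanSpace.single 0 1 ∧ ∀ a, (Φ a) 0 = inner ℝ e a := by
  obtain ⟨Φ, h⟩ : ∃ Φ : EuclideanSpace ℝ (Fin (k + 1)) ≃ₗᵢ[ℝ] EuclideanSpace ℝ (Fin (k + 1)),
      Φ e = EuclideanSpace.single 0 1 := ⟨_, Submodule.reflection_sub (by simp [he])⟩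
  refine ⟨Φ, h, fun a => ?_⟩
  rw [← Φ.inner_map_map e a, h, EuclideanSpace.inner_single_left]
  simp

lemma exists_hausdorffMeasure_le_volume_cone_of_cap {k : ℕ} :
    ∃ C : ℝ≥0, ∀ e : EuclideanSpace ℝ (Fin (k + 1)), ‖e‖ = 1 →
      ∀ A : Set (EuclideanSpace ℝ (Fin (k + 1))), MeasurableSet A →
      A ⊆ sphere 0 1 → (∀ a ∈ A, 1 / 2 < inner ℝ e a) →
      μH[(k : ℝ)] A ≤ C * volume (Ioo (0 : ℝ) 1 • A) := by
  obtain ⟨C, hC⟩ := exists_hausdorffMeasure_le_volume_cone_of_pole k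
  refine ⟨C, fun e he A hA hAS hA0 => ?_⟩
  obtain ⟨Φ, -, hΦ⟩ := exists_linearIsometryEquiv_map_single he
  have h := hC (Φ '' A) (Φ.toHomeomorph.measurableEmbedding.measurableSet_image.2 hA)
    (by rintro _ ⟨a, ha, rfl⟩; simpa using hAS ha)
    (by rintro _ ⟨a, ha, rfl⟩; rw [hΦ]; exact hA0 a ha)
  rw [Φ.isometry.hausdorffMeasure_image (Or.inl (by positivity))] at h
  have h2 : Ioo (0 : ℝ) 1 • (Φ '' A) = Φ '' (Ioo (0 : ℝ) 1 • A) := by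
    ext x
    constructor
    · rintro ⟨t, ht, _, ⟨a, ha, rfl⟩, rfl⟩
      exact ⟨t • a, ⟨t, ht, a, ha, rfl⟩, by simp⟩
    · rintro ⟨_, ⟨t, ht, a, ha, rfl⟩, rfl⟩
      exact ⟨t, ht, Φ a, ⟨a, ha, rfl⟩, by simp⟩
  have h3 : volume (Φ '' (Ioo (0 : ℝ) 1 • A)) = volume (Ioo (0 : ℝ) 1 • A) := by
    rw [← Φ.measurePreserving.measure_preimage_emb Φ.toHomeomorph.measurableEmbedding,
      preimage_image_eq _ Φ.injective]
  rwa [h2, h3] at h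

lemma exists_hausdorffMeasure_sphere_le_toSphere (k : ℕ) :
    ∃ C : ℝ≥0, (μH[(k : ℝ)] : Measure (sphere (0 : EuclideanSpace ℝ (Fin (k + 1))) 1)) ≤
      C • (volume : Measure (EuclideanSpace ℝ (Fin (k + 1)))).toSphere := by
  obtain ⟨C, hC⟩ := exists_hausdorffMeasure_le_volume_cone_of_cap (k := k)
  let U : EuclideanSpace ℝ (Fin (k + 1)) → Set (EuclideanSpace ℝ (Fin (k + 1))) :=
    fun e => {a | 1 / 2 < inner ℝ e a}
  have hU : ∀ e, IsOpen (U e) := fun e => isOpen_lt continuous_const (by fun_prop)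
  obtain ⟨t, htS, ht⟩ := (isCompact_sphere (0 : EuclideanSpace ℝ (Fin (k + 1))) 1).elim_nhds_subcover
    U (fun x hx => (hU x).mem_nhds (by
      have : ‖x‖ = 1 := by simpa using hx
      simp only [U, mem_ofPred_eq, real_inner_self_eq_norm_sq, this]
      norm_num))
  refine ⟨t.card * C, Measure.le_iff.2 fun s hs => ?_⟩
  set A : Set (EuclideanSpace ℝ (Fin (k + 1))) := Subtype.val '' s with hA
  have hAm : MeasurableSet A := (MeasurableEmbedding.subtype_coe
    isClosed_sphere.measurableSet).measurableSet_image.2 hs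
  have hAS : A ⊆ sphere 0 1 := by rintro _ ⟨x, -, rfl⟩; exact x.2
  rw [Measure.smul_apply, Measure.toSphere_apply' _ hs,
    ← isometry_subtype_coe.hausdorffMeasure_image (Or.inl (by positivity)), ← hA]
  have h1 : A ⊆ ⋃ e ∈ t, A ∩ U e := fun a ha => by
    have := ht (hAS ha)
    simp only [mem_iUnion] at this ⊢
    obtain ⟨e, he, h⟩ := this
    exact ⟨e, he, ha, h⟩
  calc μH[(k : ℝ)] A ≤ ∑ e ∈ t, μH[(k : ℝ)] (A ∩ U e) :=
        (measure_mono h1).trans (measure_biUnion_finset_le _ _)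
    _ ≤ ∑ e ∈ t, C * volume (Ioo (0 : ℝ) 1 • A) := by
        refine Finset.sum_le_sum fun e he => ?_
        refine (hC e (by simpa using htS e he) _ (hAm.inter (hU e).measurableSet)
          (inter_subset_left.trans hAS) (fun a ha => ha.2)).trans ?_
        gcongr
        exact inter_subset_left
    _ = (t.card * C : ℝ≥0) • (1 * volume (Ioo (0 : ℝ) 1 • A)) := by
        rw [Finset.sum_const, ENNReal.smul_def, smul_eq_mul, nsmul_eq_mul]
        push_cast
        ring
    _ ≤ _ := by
        gcongr
        simp

lemma lipschitzOnWith_gnomonic_of_near_pole {k : ℕ} {ε c : ℝ} (hε : 0 ≤ ε)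
    (hc : 0 < c) {A : Set (EuclideanSpace ℝ (Fin (k + 1)))} (hA : ∀ a ∈ A, c ≤ a 0)
    (hA' : ∀ a ∈ A, ‖a - EuclideanSpace.single 0 1‖ ≤ ε) :
    LipschitzOnWith (1 / c + ε / c ^ 2).toNNReal gnomonic A := by
  refine LipschitzOnWith.of_dist_le_mul fun a ha b hb => ?_
  rw [Real.coe_toNNReal _ (by positivity), dist_pi_le_iff (by positivity)]
  intro i
  have ha0 := hA a ha
  have hb0 := hA b hb
  have ha1 : 0 < a 0 := hc.trans_le ha0
  have hb1 : 0 < b 0 := hc.trans_le hb0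
  have h1 : |a i.succ - b i.succ| ≤ dist a b := by
    have := PiLp.norm_apply_le (a - b) i.succ
    rwa [← dist_eq_norm, PiLp.sub_apply, Real.norm_eq_abs] at this
  have h2 : |b 0 - a 0| ≤ dist a b := by
    have := PiLp.norm_apply_le (b - a) 0
    rwa [← dist_eq_norm, PiLp.sub_apply, Real.norm_eq_abs, dist_comm] at this
  have h3 : |b i.succ| ≤ ε := by
    have := (PiLp.norm_apply_le (b - EuclideanSpace.single 0 1) i.succ).trans (hA' b hb)
    simpa using this
  have h4 : gnomonic a i - gnomonic b i =
      (a i.succ - b i.succ) / a 0 + b i.succ * (b 0 - a 0) / (a 0 * b 0) := by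
    simp only [gnomonic]
    field_simp
    ring
  rw [Real.dist_eq, h4]
  refine (abs_add_le _ _).trans ?_
  rw [abs_div, abs_div, abs_mul, abs_mul, abs_of_pos ha1, abs_of_pos hb1]
  calc _ ≤ dist a b / c + ε * dist a b / (c * c) := by gcongr
    _ = _ := by field_simp

lemma exists_toSphere_le_ediam_pow (k : ℕ) {L : ℝ≥0} (hL : 1 < L) :
    ∃ ε : ℝ≥0∞, 0 < ε ∧ ∀ s : Set (sphere (0 : EuclideanSpace ℝ (Fin (k + 1))) 1),
      ediam s ≤ ε → (volume : Measure (EuclideanSpace ℝ (Fin (k + 1)))).toSphere s ≤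
        L ^ k * ediam s ^ k := by
  obtain ⟨ε, hε0, hε1, hε⟩ : ∃ ε : ℝ, 0 < ε ∧ ε < 1 ∧
      1 / (1 - ε ^ 2 / 2) + ε / (1 - ε ^ 2 / 2) ^ 2 < L := by
    have hcont : ContinuousAt
        (fun ε : ℝ => 1 / (1 - ε ^ 2 / 2) + ε / (1 - ε ^ 2 / 2) ^ 2) 0 := by
      apply ContinuousAt.add
      · exact ContinuousAt.div (by fun_prop) (by fun_prop) (by norm_num)
      · exact ContinuousAt.div (by fun_prop) (by fun_prop) (by norm_num)
    have h1 := (hcont.eventually_lt (continuousAt_const (y := (L : ℝ)))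
      (by simpa using hL)).filter_mono (nhdsWithin_le_nhds (s := Ioi 0))
    have h2 : ∀ᶠ ε : ℝ in 𝓝[>] 0, ε ∈ Ioo (0 : ℝ) 1 := Ioo_mem_nhdsGT one_pos
    obtain ⟨ε, h3, h4⟩ := (h1.and h2).exists
    exact ⟨ε, h4.1, h4.2, h3⟩
  refine ⟨ENNReal.ofReal ε, by simpa using hε0, fun s hs => ?_⟩
  rcases s.eq_empty_or_nonempty with rfl | ⟨e, he⟩
  · simp
  have hc : 0 < 1 - ε ^ 2 / 2 := by nlinarith
  have he1 : ‖(e : EuclideanSpace ℝ (Fin (k + 1)))‖ = 1 := by simp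
  obtain ⟨Φ, hΦe, hΦ⟩ := exists_linearIsometryEquiv_map_single he1
  rw [← ediam_closure] at hs ⊢
  refine (measure_mono subset_closure).trans ?_
  set F := closure s
  have heF : e ∈ F := subset_closure he
  have hF : MeasurableSet F := isClosed_closure.measurableSet
  set A : Set (EuclideanSpace ℝ (Fin (k + 1))) := (fun x => Φ x.1) '' F with hA
  have hAd : ediam A = ediam F := (Φ.isometry.comp isometry_subtype_coe).ediam_image F
  have hA1 : ∀ a ∈ A, ‖a‖ = 1 := by
    rintro _ ⟨x, -, rfl⟩
    simp
  have hA' : ∀ a ∈ A, ‖a - EuclideanSpace.single 0 1‖ ≤ ε := by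
    rintro _ ⟨x, hx, rfl⟩
    rw [← hΦe, ← map_sub, Φ.norm_map, ← dist_eq_norm, ← Subtype.dist_eq,
      ← ENNReal.ofReal_le_ofReal_iff hε0.le, ← edist_dist]
    exact (edist_le_ediam_of_mem hx heF).trans hs
  have hA0 : ∀ a ∈ A, 1 - ε ^ 2 / 2 ≤ a 0 := by
    intro a ha
    have h1 := norm_sub_sq_real a (EuclideanSpace.single 0 1)
    have h2 := hA' a ha
    rw [hA1 a ha, EuclideanSpace.inner_single_right] at h1
    simp at h1
    nlinarith [norm_nonneg (a - EuclideanSpace.single 0 1)]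
  have hlip := lipschitzOnWith_gnomonic_of_near_pole hε0.le hc hA0 hA'
  set T := closure (gnomonic '' A) with hT
  have hTm : MeasurableSet T := isClosed_closure.measurableSet
  have hTd : volume T ≤ (L * ediam F) ^ k := by
    refine (Real.volume_pi_le_diam_pow T).trans ?_
    rw [Fintype.card_fin, hT, ediam_closure]
    gcongr
    refine ediam_image_le_iff.2 fun x hx y hy => (hlip hx hy).trans ?_
    rw [← hAd]
    gcongr
    · exact Real.toNNReal_le_iff_le_coe.2 hε.le
    · exact edist_le_ediam_of_mem hx hy
  have hsub : Ioo (0 : ℝ) 1 • (Subtype.val '' F) ⊆ Φ ⁻¹' (truncatedCone 1 T) := by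
    rintro _ ⟨t, ht, _, ⟨x, hx, rfl⟩, rfl⟩
    have hxA : Φ x ∈ A := ⟨x, hx, rfl⟩
    have hx0 : 0 < (Φ x) 0 := hc.trans_le (hA0 _ hxA)
    have hx1 : (Φ x) 0 ≤ 1 := by
      have := PiLp.norm_apply_le (Φ x) 0
      rw [hA1 _ hxA] at this
      exact (le_abs_self _).trans this
    refine ⟨?_, ?_⟩
    · have ht0 := ht.1
      have ht1 := ht.2
      simp only [map_smul, PiLp.smul_apply, smul_eq_mul]
      exact ⟨by positivity, by nlinarith⟩
    · simp only [map_smul]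
      rw [gnomonic_smul ht.1.ne']
      exact subset_closure ⟨_, hxA, rfl⟩
  rw [Measure.toSphere_apply' _ hF]
  calc _ ≤ (Module.finrank ℝ (EuclideanSpace ℝ (Fin (k + 1))) : ℝ≥0∞) *
        volume (Φ ⁻¹' (truncatedCone 1 T)) := by gcongr
    _ = (k + 1 : ℕ) * (ENNReal.ofReal (1 ^ (k + 1) / (k + 1)) * volume T) := by
      rw [Φ.measurePreserving.measure_preimage
        (measurableSet_truncatedCone 1 hTm).nullMeasurableSet,
        volume_truncatedCone zero_le_one hTm]
      simp
    _ = volume T := by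
      rw [← mul_assoc, ← ENNReal.ofReal_natCast, ← ENNReal.ofReal_mul (by positivity)]
      have : ((k + 1 : ℕ) : ℝ) * (1 ^ (k + 1) / (k + 1)) = 1 := by
        push_cast; field_simp; simp
      rw [this]; simp
    _ ≤ _ := by rwa [mul_pow] at hTd

lemma toSphere_le_hausdorffMeasure_sphere (k : ℕ) :
    (volume : Measure (EuclideanSpace ℝ (Fin (k + 1)))).toSphere ≤ μH[(k : ℝ)] := by
  have key : ∀ L : ℝ≥0, 1 < L → ((L : ℝ≥0∞) ^ k)⁻¹ •
      (volume : Measure (EuclideanSpace ℝ (Fin (k + 1)))).toSphere ≤ μH[(k : ℝ)] := by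
    intro L hL
    obtain ⟨ε, hε, h⟩ := exists_toSphere_le_ediam_pow k hL
    refine Measure.le_hausdorffMeasure _ _ ε hε fun s hs => ?_
    rw [Measure.smul_apply, smul_eq_mul, ENNReal.rpow_natCast]
    have hL0 : (L : ℝ≥0∞) ≠ 0 := by simpa using (zero_lt_one.trans hL).ne'
    rw [ENNReal.inv_mul_le_iff (pow_ne_zero _ hL0) (by finiteness)]
    exact h s hs
  refine Measure.le_iff'.2 fun s => ?_
  have hlim : Tendsto (fun L : ℝ≥0 => ((L : ℝ≥0∞) ^ k)⁻¹ *
      (volume : Measure (EuclideanSpace ℝ (Fin (k + 1)))).toSphere s) (𝓝[>] 1)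
      (𝓝 ((((1 : ℝ≥0) : ℝ≥0∞) ^ k)⁻¹ *
        (volume : Measure (EuclideanSpace ℝ (Fin (k + 1)))).toSphere s)) := by
    refine ENNReal.Tendsto.mul_const ?_ (Or.inl (by simp))
    have : Continuous fun L : ℝ≥0 => ((L : ℝ≥0∞) ^ k)⁻¹ := by fun_prop
    exact this.continuousAt.mono_left nhdsWithin_le_nhds
  have := le_of_tendsto hlim (b := μH[(k : ℝ)] s)
    (by filter_upwards [self_mem_nhdsWithin] with L hL using key L hL s)
  simpa using this

lemma rpow_integral_le_of_weight {α : Type*} {mα : MeasurableSpace α} {μ : Measure α}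
    {χ H : α → ℝ} {q δ : ℝ} (hq : 0 < q) (hδ : 0 < δ) (hχ0 : ∀ x, 0 ≤ χ x) (hH : ∀ x, 0 < H x)
    (hχ : Integrable χ μ) (hA : Integrable (fun x => H x ^ (-q) * χ x) μ)
    (hB : Integrable (fun x => H x ^ δ * χ x) μ) (hX : 0 < ∫ x, χ x ∂μ) :
    0 < ∫ x, H x ^ (-q) * χ x ∂μ ∧
    (∫ x, χ x ∂μ) ^ (1 / q + 1 / δ) ≤
      (∫ x, H x ^ (-q) * χ x ∂μ) ^ (1 / q) * (∫ x, H x ^ δ * χ x ∂μ) ^ (1 / δ) := by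
  have hpos : ∀ p : ℝ, Integrable (fun x => H x ^ p * χ x) μ → 0 < ∫ x, H x ^ p * χ x ∂μ := by
    intro p hp
    have h0 : ∀ x, 0 ≤ H x ^ p * χ x := fun x => mul_nonneg (Real.rpow_nonneg (hH x).le _) (hχ0 x)
    refine (integral_nonneg h0).lt_of_ne fun h => hX.ne' ?_
    rw [eq_comm, integral_eq_zero_iff_of_nonneg h0 hp] at h
    refine integral_eq_zero_of_ae ?_
    filter_upwards [h] with x hx
    exact (mul_eq_zero.1 hx).resolve_left (Real.rpow_pos_of_pos (hH x) p).ne'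
  have hA0 := hpos _ hA
  have hB0 := hpos _ hB
  refine ⟨hA0, ?_⟩
  set A := ∫ x, H x ^ (-q) * χ x ∂μ
  set B := ∫ x, H x ^ δ * χ x ∂μ
  have hqd : 0 < q + δ := by positivity
  set θ := δ / (q + δ) with hθ
  have hθ' : 1 - θ = q / (q + δ) := by rw [hθ]; field_simp; ring
  have hθ0 : 0 ≤ θ := by positivity
  have hθ1 : 0 ≤ 1 - θ := by rw [hθ']; positivity
  set D := A ^ θ * B ^ (1 - θ) with hD
  have hD0 : 0 < D := by positivity
  have hpt : ∀ x, χ x ≤ D * (θ / A) * (H x ^ (-q) * χ x) +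
      D * ((1 - θ) / B) * (H x ^ δ * χ x) := by
    intro x
    have hx := hH x
    have h1 := Real.geom_mean_le_arith_mean2_weighted hθ0 hθ1
      (div_nonneg (Real.rpow_nonneg hx.le (-q)) hA0.le)
      (div_nonneg (Real.rpow_nonneg hx.le δ) hB0.le) (by ring)
    rw [Real.div_rpow (by positivity) hA0.le, Real.div_rpow (by positivity) hB0.le,
      ← Real.rpow_mul hx.le, ← Real.rpow_mul hx.le, div_mul_div_comm,
      ← Real.rpow_add hx] at h1
    have h2 : -q * θ + δ * (1 - θ) = 0 := by rw [hθ', hθ]; ring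
    rw [h2, Real.rpow_zero, ← hD, div_le_iff₀ hD0] at h1
    calc χ x = 1 * χ x := (one_mul _).symm
      _ ≤ _ := mul_le_mul_of_nonneg_right h1 (hχ0 x)
      _ = _ := by ring
  have h3 : ∫ x, χ x ∂μ ≤ D := by
    calc ∫ x, χ x ∂μ ≤ ∫ x, (D * (θ / A) * (H x ^ (-q) * χ x) +
          D * ((1 - θ) / B) * (H x ^ δ * χ x)) ∂μ :=
          integral_mono hχ ((hA.const_mul _).add (hB.const_mul _)) hpt
      _ = D * (θ / A) * A + D * ((1 - θ) / B) * B := by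
          rw [integral_add (hA.const_mul _) (hB.const_mul _), integral_const_mul,
            integral_const_mul]
      _ = D := by field_simp; ring
  calc _ ≤ D ^ (1 / q + 1 / δ) := by gcongr
    _ = _ := by
      rw [hD, Real.mul_rpow (by positivity) (by positivity), ← Real.rpow_mul hA0.le,
        ← Real.rpow_mul hB0.le, hθ', hθ]
      congr 2 <;> field_simp <;> ring

lemma exists_plateau {a b t : ℝ} (ht : 0 < t) (hab : 4 * t < b - a) :
    ∃ χ : ℝ → ℝ, Continuous χ ∧ (∀ r, 0 ≤ χ r) ∧ (∀ r, χ r ≤ 1) ∧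
      (∀ r ∉ Icc (a + t) (b - t), χ r = 0) ∧ b - a - 4 * t ≤ ∫ r in Ioo a b, χ r := by
  refine ⟨fun r => max 0 (min 1 (min ((r - (a + t)) / t) ((b - t - r) / t))), by fun_prop,
    fun r => le_max_left _ _, fun r => max_le zero_le_one (min_le_left _ _), fun r hr => ?_, ?_⟩
  · apply max_eq_left
    refine (min_le_right _ _).trans ?_
    rw [mem_Icc, not_and_or, not_le, not_le] at hr
    rcases hr with hr | hr
    · exact (min_le_left _ _).trans (div_nonpos_of_nonpos_of_nonneg (by linarith) ht.le)
    · exact (min_le_right _ _).trans (div_nonpos_of_nonpos_of_nonneg (by linarith) ht.le)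
  · set χ : ℝ → ℝ := fun r => max 0 (min 1 (min ((r - (a + t)) / t) ((b - t - r) / t)))
    have hχc : Continuous χ := by fun_prop
    have h1 : ∀ r ∈ Ioo (a + 2 * t) (b - 2 * t), 1 ≤ χ r := fun r hr => by
      refine le_max_of_le_right (le_min le_rfl (le_min ?_ ?_))
      · rw [le_div_iff₀ ht]; linarith [hr.1]
      · rw [le_div_iff₀ ht]; linarith [hr.2]
    calc b - a - 4 * t = ∫ r in Ioo (a + 2 * t) (b - 2 * t), (1 : ℝ) := by
          simp; rw [max_eq_left (by linarith)]; ring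
      _ ≤ ∫ r in Ioo (a + 2 * t) (b - 2 * t), χ r :=
          setIntegral_mono_on (by simp) (hχc.integrableOn_Icc.mono_set Ioo_subset_Icc_self)
            measurableSet_Ioo h1
      _ ≤ ∫ r in Ioo a b, χ r := by
          refine setIntegral_mono_set (hχc.integrableOn_Icc.mono_set Ioo_subset_Icc_self)
            (Eventually.of_forall fun r => le_max_left _ _) ?_
          exact (Ioo_subset_Ioo (by linarith) (by linarith)).eventuallyLE

lemma rpow_le_rpow_add_mul {δ ε t : ℝ} (hδ0 : 0 < δ) (hδ1 : δ ≤ 1) (hε : 0 < ε) (ht : 0 ≤ t) :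
    t ^ δ ≤ ε ^ δ + ε ^ (δ - 1) * t := by
  rcases le_total t ε with h | h
  · have := Real.rpow_le_rpow ht h hδ0.le
    have : 0 ≤ ε ^ (δ - 1) * t := by positivity
    linarith
  · have ht' : 0 < t := hε.trans_le h
    have h1 : t ^ δ = t ^ (δ - 1) * t := by
      rw [← Real.rpow_add_one ht'.ne']; ring_nf
    have h2 := Real.rpow_le_rpow_of_nonpos hε h (by linarith : δ - 1 ≤ 0)
    rw [h1]
    have : 0 ≤ ε ^ δ := by positivity
    nlinarith

lemma exists_optimized_weight {a b : ℝ} (hab : a < b) {f : ℝ → ℝ} (hf0 : ∀ r, 0 ≤ f r)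
    (hf : IntegrableOn f (Ioo a b)) {s : ℝ} (hs : 1 < s) {δ : ℝ} (hδ0 : 0 < δ) (hδ1 : δ ≤ 1)
    {κ : ℝ} (hκ : (b - a) ^ (-(s - 1 + 1 / δ)) * (∫ r in Ioo a b, f r ^ δ) ^ (1 / δ) < κ) :
    ∃ ψ : ℝ → ℝ, Continuous ψ ∧ (∀ r, 0 ≤ ψ r) ∧
      (∃ a' b', a < a' ∧ b' < b ∧ ∀ r ∉ Icc a' b', ψ r = 0) ∧
      ∫ r in Ioo a b, ψ r = 1 ∧ ∫ r in Ioo a b, f r * ψ r ^ s ≤ κ := by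
  set I := ∫ r in Ioo a b, f r ^ δ with hI
  set M := b - a with hM
  have hM0 : 0 < M := sub_pos.2 hab
  have hI0 : 0 ≤ I := integral_nonneg fun r => Real.rpow_nonneg (hf0 r) _
  set q := 1 / (s - 1) with hq
  have hs1 : 0 < s - 1 := by linarith
  have hq0 : 0 < q := by positivity
  have hq1 : 1 / q = s - 1 := by rw [hq, one_div_one_div]
  obtain ⟨e, he0, heM, he⟩ : ∃ e : ℝ, 0 < e ∧ e < M ∧
      (M - e) ^ (-(s - 1 + 1 / δ)) * (I + e) ^ (1 / δ) + e < κ := by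
    have hcont : ContinuousAt
        (fun e : ℝ => (M - e) ^ (-(s - 1 + 1 / δ)) * (I + e) ^ (1 / δ) + e) 0 := by
      refine ContinuousAt.add (ContinuousAt.mul ?_ ?_) continuousAt_id
      · exact ContinuousAt.rpow_const (by fun_prop) (Or.inl (by simpa using hM0.ne'))
      · exact ContinuousAt.rpow_const (by fun_prop) (Or.inr (by positivity))
    have h1 := (hcont.eventually_lt (continuousAt_const (y := κ))
      (by simpa using hκ)).filter_mono (nhdsWithin_le_nhds (s := Ioi 0))
    have h2 : ∀ᶠ e : ℝ in 𝓝[>] 0, e ∈ Ioo (0 : ℝ) M := Ioo_mem_nhdsGT hM0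
    obtain ⟨e, h3, h4⟩ := (h1.and h2).exists
    exact ⟨e, h4.1, h4.2, h3⟩
  have hMe : 0 < M - e := by linarith
  have hκ0 : 0 < κ := by
    have : 0 ≤ (M - e) ^ (-(s - 1 + 1 / δ)) * (I + e) ^ (1 / δ) := by positivity
    linarith
  obtain ⟨ε, hε0, hε⟩ : ∃ ε : ℝ, 0 < ε ∧ 2 * ε ^ δ * M ≤ e / 2 := by
    refine ⟨(e / (4 * M)) ^ (1 / δ), by positivity, ?_⟩
    rw [← Real.rpow_mul (by positivity), one_div_mul_cancel hδ0.ne', Real.rpow_one]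
    apply le_of_eq
    field_simp
    norm_num
  set K := κ ^ q * ε ^ (-q) with hK
  have hK0 : 0 < K := by positivity
  obtain ⟨β, hβ0, hβ1, hβ2⟩ : ∃ β : ℝ, 0 < β ∧ ε ^ (δ - 1) * β ≤ e / 2 ∧ K ^ s * β ≤ e := by
    refine ⟨min (e / 2 / ε ^ (δ - 1)) (e / K ^ s), by positivity, ?_, ?_⟩
    · rw [mul_comm, ← le_div_iff₀ (by positivity)]; exact min_le_left _ _
    · rw [mul_comm, ← le_div_iff₀ (by positivity)]; exact min_le_right _ _
  obtain ⟨χ, hχc, hχ0, hχ1, hχs, hχI⟩ := exists_plateau (a := a) (b := b) (t := e / 4)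
    (by positivity) (by linarith)
  have hχX : M - e ≤ ∫ r in Ioo a b, χ r := by linarith
  have hint : ∀ {u : ℝ → ℝ}, Continuous u → IntegrableOn u (Ioo a b) := fun hu =>
    hu.integrableOn_Icc.mono_set Ioo_subset_Icc_self
  have hvol : volume.real (Ioo a b) = M := by simp [hab.le, hM]
  obtain ⟨G, -, hGβ, hGc, hGi⟩ :=
    ((integrable_indicator_iff measurableSet_Ioo).2 hf).exists_hasCompactSupport_integral_sub_le hβ0
  have hfG : IntegrableOn (fun r => |f r - G r|) (Ioo a b) := (hf.sub (hint hGc)).abs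
  have hfGβ : ∫ r in Ioo a b, |f r - G r| ≤ β := by
    refine le_trans ?_ hGβ
    calc ∫ r in Ioo a b, |f r - G r|
        = ∫ r in Ioo a b, ‖(Ioo a b).indicator f r - G r‖ :=
          setIntegral_congr_fun measurableSet_Ioo fun r hr => by
            simp [indicator_of_mem hr]
      _ ≤ _ := setIntegral_le_integral
          (((integrable_indicator_iff measurableSet_Ioo).2 hf).sub hGi).norm
          (Eventually.of_forall fun r => norm_nonneg _)
  set H : ℝ → ℝ := fun r => |G r| + ε with hH
  have hHε : ∀ r, ε ≤ H r := fun r => le_add_of_nonneg_left (abs_nonneg _)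
  have hH0 : ∀ r, 0 < H r := fun r => hε0.trans_le (hHε r)
  have hHc : Continuous H := by fun_prop
  have hHpc : ∀ p : ℝ, Continuous fun r => H r ^ p := fun p =>
    hHc.rpow_const fun r => Or.inl (hH0 r).ne'
  have hX : 0 < ∫ r in Ioo a b, χ r := hMe.trans_le hχX
  obtain ⟨hA0, hAB⟩ := rpow_integral_le_of_weight (μ := volume.restrict (Ioo a b)) hq0 hδ0 hχ0 hH0
    (hint hχc) (hint ((hHpc _).mul hχc)) (hint ((hHpc _).mul hχc)) hX
  set A := ∫ r in Ioo a b, H r ^ (-q) * χ r with hA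
  set X := ∫ r in Ioo a b, χ r
  have hfδ : IntegrableOn (fun r => f r ^ δ) (Ioo a b) := by
    refine Integrable.mono' (g := fun r => 1 ^ δ + 1 ^ (δ - 1) * f r)
      ((integrable_const _).add (hf.const_mul _))
      ((hf.aemeasurable.pow_const δ).aestronglyMeasurable) (Eventually.of_forall fun r => ?_)
    rw [Real.norm_of_nonneg (Real.rpow_nonneg (hf0 r) _)]
    exact rpow_le_rpow_add_mul hδ0 hδ1 one_pos (hf0 r)
  have hB : ∫ r in Ioo a b, H r ^ δ * χ r ≤ I + e := by
    have hpt : ∀ r, H r ^ δ * χ r ≤ f r ^ δ + (2 * ε ^ δ + ε ^ (δ - 1) * |f r - G r|) := by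
      intro r
      have h1 : H r ^ δ * χ r ≤ H r ^ δ :=
        mul_le_of_le_one_right (Real.rpow_nonneg (hH0 r).le _) (hχ1 r)
      have h2 : H r ≤ f r + (|f r - G r| + ε) := by
        have := abs_sub_abs_le_abs_sub (G r) (f r)
        rw [abs_of_nonneg (hf0 r), abs_sub_comm] at this
        simp only [hH]; linarith
      have h3 : H r ^ δ ≤ f r ^ δ + (|f r - G r| ^ δ + ε ^ δ) :=
        (Real.rpow_le_rpow (hH0 r).le h2 hδ0.le).trans
          ((Real.rpow_add_le_add_rpow (hf0 r) (by positivity) hδ0.le hδ1).trans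
            (by gcongr; exact Real.rpow_add_le_add_rpow (abs_nonneg _) hε0.le hδ0.le hδ1))
      have h4 := rpow_le_rpow_add_mul hδ0 hδ1 hε0 (abs_nonneg (f r - G r))
      linarith
    have hi : IntegrableOn (fun r => 2 * ε ^ δ + ε ^ (δ - 1) * |f r - G r|) (Ioo a b) :=
      (integrable_const _).add (hfG.const_mul _)
    calc _ ≤ ∫ r in Ioo a b, (f r ^ δ + (2 * ε ^ δ + ε ^ (δ - 1) * |f r - G r|)) :=
          integral_mono (hint ((hHpc _).mul hχc)) (hfδ.add hi) hpt
      _ = I + (2 * ε ^ δ * M + ε ^ (δ - 1) * ∫ r in Ioo a b, |f r - G r|) := by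
          rw [integral_add hfδ hi, integral_add (integrable_const _) (hfG.const_mul _),
            integral_const_mul (ε ^ (δ - 1)), setIntegral_const, hvol, smul_eq_mul, mul_comm M]
      _ ≤ I + (e / 2 + ε ^ (δ - 1) * β) := by gcongr
      _ ≤ I + e := by linarith
  have hB0 : 0 ≤ ∫ r in Ioo a b, H r ^ δ * χ r :=
    integral_nonneg fun r => mul_nonneg (Real.rpow_nonneg (hH0 r).le _) (hχ0 r)
  have hAκ : (A ^ (s - 1))⁻¹ + e ≤ κ := by
    refine le_trans ?_ he.le
    gcongr
    rw [hq1] at hAB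
    calc (A ^ (s - 1))⁻¹ ≤ X ^ (-(s - 1 + 1 / δ)) *
          (∫ r in Ioo a b, H r ^ δ * χ r) ^ (1 / δ) := by
          rw [Real.rpow_neg hX.le, inv_mul_eq_div, le_div_iff₀ (by positivity),
            inv_mul_le_iff₀ (by positivity)]
          exact hAB
      _ ≤ _ := by
          gcongr ?_ * ?_
          · exact Real.rpow_le_rpow_of_nonpos hMe hχX (by
              have : 0 < 1 / δ := by positivity
              linarith)
          · gcongr
  have hAq : A⁻¹ ≤ κ ^ q := by
    have h1 : A⁻¹ = ((A ^ (s - 1))⁻¹) ^ q := by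
      rw [← Real.inv_rpow hA0.le, ← Real.rpow_mul (by positivity), hq, mul_one_div_cancel hs1.ne',
        Real.rpow_one]
    rw [h1]
    gcongr
    linarith
  set ψ : ℝ → ℝ := fun r => A⁻¹ * (H r ^ (-q) * χ r) with hψ
  have hψ0 : ∀ r, 0 ≤ ψ r := fun r =>
    mul_nonneg (inv_nonneg.2 hA0.le) (mul_nonneg (Real.rpow_nonneg (hH0 r).le _) (hχ0 r))
  have hψc : Continuous ψ := continuous_const.mul ((hHpc _).mul hχc)
  have hψsc : Continuous fun r => ψ r ^ s := hψc.rpow_const fun r => Or.inr (by linarith)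
  have hψK : ∀ r, ψ r ≤ K := fun r => by
    have h1 : H r ^ (-q) ≤ ε ^ (-q) :=
      Real.rpow_le_rpow_of_nonpos hε0 (hHε r) (by linarith)
    calc ψ r ≤ κ ^ q * (ε ^ (-q) * 1) := by
          simp only [hψ]
          gcongr
          exacts [mul_nonneg (Real.rpow_nonneg (hH0 r).le _) (hχ0 r), hχ0 r, hχ1 r]
      _ = K := by rw [mul_one]
  refine ⟨ψ, hψc, hψ0, ⟨a + e / 4, b - e / 4, by linarith, by linarith, fun r hr => ?_⟩, ?_, ?_⟩
  · simp [hψ, hχs r hr]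
  · rw [hψ, integral_const_mul, inv_mul_cancel₀ hA0.ne']
  have hmain : ∀ r, f r * ψ r ^ s ≤ A ^ (-s) * (H r ^ (-q) * χ r) + K ^ s * |f r - G r| := by
    intro r
    have hHr := hH0 r
    have h1 : f r ≤ H r + |f r - G r| := by
      have h2 := le_abs_self (f r - G r)
      have h3 := le_abs_self (G r)
      simp only [hH]; linarith
    have h2 : ψ r ^ s ≤ K ^ s := Real.rpow_le_rpow (hψ0 r) (hψK r) (by linarith)
    have h3 : H r * ψ r ^ s ≤ A ^ (-s) * (H r ^ (-q) * χ r) := by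
      have h4 : χ r ^ s ≤ χ r := by
        simpa using Real.rpow_le_rpow_of_exponent_ge' (hχ0 r) (hχ1 r) zero_le_one hs.le
      have h5 : H r * (H r ^ (-q)) ^ s = H r ^ (-q) := by
        rw [← Real.rpow_mul hHr.le, mul_comm, ← Real.rpow_add_one hHr.ne']
        congr 1
        rw [hq]; field_simp; ring
      rw [hψ, Real.mul_rpow (by positivity) (mul_nonneg (by positivity) (hχ0 r)),
        Real.mul_rpow (by positivity) (hχ0 r), Real.inv_rpow hA0.le, ← Real.rpow_neg hA0.le]
      calc _ = A ^ (-s) * ((H r * (H r ^ (-q)) ^ s) * χ r ^ s) := by ring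
        _ ≤ _ := by rw [h5]; gcongr
    calc f r * ψ r ^ s ≤ (H r + |f r - G r|) * ψ r ^ s :=
          mul_le_mul_of_nonneg_right h1 (Real.rpow_nonneg (hψ0 r) _)
      _ = H r * ψ r ^ s + ψ r ^ s * |f r - G r| := by ring
      _ ≤ _ := by gcongr
  have hAi : IntegrableOn (fun r => A ^ (-s) * (H r ^ (-q) * χ r)) (Ioo a b) :=
    (hint ((hHpc _).mul hχc)).const_mul _
  calc _ ≤ ∫ r in Ioo a b, (A ^ (-s) * (H r ^ (-q) * χ r) + K ^ s * |f r - G r|) := by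
        refine integral_mono_of_nonneg
          (Eventually.of_forall fun r => mul_nonneg (hf0 r) (Real.rpow_nonneg (hψ0 r) _))
          (hAi.add (hfG.const_mul _)) (Eventually.of_forall hmain)
    _ = A ^ (-s) * A + K ^ s * ∫ r in Ioo a b, |f r - G r| := by
        rw [integral_add hAi (hfG.const_mul _), integral_const_mul, integral_const_mul]
    _ ≤ (A ^ (s - 1))⁻¹ + K ^ s * β := by
        rw [← Real.rpow_add_one hA0.ne', ← Real.rpow_neg hA0.le,
          show -s + 1 = -(s - 1) by ring]
        gcongr
    _ ≤ κ := by linarith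

lemma integrable_volumeIoiPow_iff {k : ℕ} {F : ℝ → ℝ} :
    Integrable (fun r : Ioi (0 : ℝ) => F r) (Measure.volumeIoiPow k) ↔
      IntegrableOn (fun r => r ^ k * F r) (Ioi 0) := by
  rw [integrableOn_iff_comap_subtypeVal measurableSet_Ioi, Measure.volumeIoiPow,
    integrable_withDensity_iff_integrable_smul' (by fun_prop) (by simp)]
  refine integrable_congr (Eventually.of_forall ?_)
  rintro ⟨x, hx : 0 < x⟩
  simp [ENNReal.toReal_ofReal (pow_nonneg hx.le k)]

lemma integral_volumeIoiPow {k : ℕ} (F : ℝ → ℝ) :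
    ∫ r : Ioi (0 : ℝ), F r ∂(Measure.volumeIoiPow k) = ∫ r in Ioi 0, r ^ k * F r := by
  rw [Measure.volumeIoiPow, integral_withDensity_eq_integral_toReal_smul (by fun_prop) (by simp),
    ← integral_subtype_comap measurableSet_Ioi fun r => r ^ k * F r]
  refine integral_congr_ae (Eventually.of_forall ?_)
  rintro ⟨x, hx : 0 < x⟩
  simp [ENNReal.toReal_ofReal (pow_nonneg hx.le k)]

lemma ae_restrict_Ioi_of_ae_volumeIoiPow {k : ℕ} {P : ℝ → Prop}
    (h : ∀ᵐ r : Ioi (0 : ℝ) ∂(Measure.volumeIoiPow k), P r) :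
    ∀ᵐ r ∂(volume.restrict (Ioi (0 : ℝ))), P r := by
  rw [Measure.volumeIoiPow, ae_withDensity_iff (by fun_prop)] at h
  rw [ae_restrict_iff_subtype measurableSet_Ioi]
  filter_upwards [h] with r hr
  exact hr (by simpa using pow_pos r.2 k)

section Polar

variable {k : ℕ} {u : EuclideanSpace ℝ (Fin (k + 1)) → ℝ}

lemma integrable_polar (hu : Integrable u) :
    Integrable (fun p : sphere (0 : EuclideanSpace ℝ (Fin (k + 1))) 1 × Ioi (0 : ℝ) =>
      u (p.2.1 • p.1.1)) ((volume : Measure (EuclideanSpace ℝ (Fin (k + 1)))).toSphere.prod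
        (Measure.volumeIoiPow k)) := by
  have h := (volume : Measure (EuclideanSpace ℝ
    (Fin (k + 1)))).measurePreserving_homeomorphUnitSphereProd.integrable_comp_emb
    (g := fun p => u (p.2.1 • p.1.1)) (Homeomorph.measurableEmbedding _)
  simp only [finrank_euclideanSpace, Fintype.card_fin, add_tsub_cancel_right] at h
  rw [← h]
  have hu' := hu.integrableOn (s := {0}ᶜ)
  rw [integrableOn_iff_comap_subtypeVal (measurableSet_singleton _).compl] at hu'
  refine hu'.congr (Eventually.of_forall fun x => ?_)
  have : ‖x.1‖ ≠ 0 := norm_ne_zero_iff.2 x.2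
  simp [smul_smul, this]

lemma integral_polar (hu : Integrable u) :
    ∫ x, u x = ∫ r in Ioi (0 : ℝ), r ^ k *
      ∫ ω : sphere (0 : EuclideanSpace ℝ (Fin (k + 1))) 1, u (r • ω.1)
        ∂(volume : Measure (EuclideanSpace ℝ (Fin (k + 1)))).toSphere := by
  have h := (volume : Measure (EuclideanSpace ℝ
    (Fin (k + 1)))).measurePreserving_homeomorphUnitSphereProd.integral_comp
    (Homeomorph.measurableEmbedding _) (fun p => u (p.2.1 • p.1.1))
  simp only [finrank_euclideanSpace, Fintype.card_fin, add_tsub_cancel_right] at h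
  rw [integral_prod_symm _ (integrable_polar hu), integral_volumeIoiPow (k := k) (fun r =>
      ∫ ω : sphere (0 : EuclideanSpace ℝ (Fin (k + 1))) 1, u (r • ω.1)
        ∂(volume : Measure (EuclideanSpace ℝ (Fin (k + 1)))).toSphere)] at h
  have h' : ∫ x, u x = ∫ x : ({0}ᶜ : Set (EuclideanSpace ℝ (Fin (k + 1)))), u x
      ∂(Measure.comap Subtype.val volume) := by
    rw [integral_subtype_comap (measurableSet_singleton _).compl u, restrict_compl_singleton]
  rw [← h, h']
  refine integral_congr_ae (Eventually.of_forall fun x => ?_)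
  have : ‖x.1‖ ≠ 0 := norm_ne_zero_iff.2 x.2
  simp [smul_smul, this]

lemma hausdorffMeasure_restrict_sphere {r : ℝ} (hr : 0 < r) :
    (μH[(k : ℝ)] : Measure (EuclideanSpace ℝ (Fin (k + 1)))).restrict (sphere 0 r) =
      ENNReal.ofReal (r ^ k) • Measure.map
        (fun ω : sphere (0 : EuclideanSpace ℝ (Fin (k + 1))) 1 => r • ω.1) μH[(k : ℝ)] := by
  ext s hs
  have hm : Measurable fun ω : sphere (0 : EuclideanSpace ℝ (Fin (k + 1))) 1 => r • ω.1 := by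
    fun_prop
  rw [Measure.restrict_apply hs, Measure.smul_apply, Measure.map_apply hm hs,
    ← (isometry_subtype_coe (s := sphere (0 : EuclideanSpace ℝ (Fin (k + 1))) 1)
      ).hausdorffMeasure_image (Or.inl (by positivity))]
  have h1 : s ∩ sphere 0 r = r • (Subtype.val ''
      ((fun ω : sphere (0 : EuclideanSpace ℝ (Fin (k + 1))) 1 => r • ω.1) ⁻¹' s)) := by
    ext x
    constructor
    · rintro ⟨hxs, hx⟩
      have hx' : ‖x‖ = r := by simpa using hx
      refine ⟨r⁻¹ • x, ⟨⟨r⁻¹ • x, ?_⟩, ?_, rfl⟩, ?_⟩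
      · simp [norm_smul, hx', abs_of_pos hr, hr.ne']
      · simpa [smul_smul, hr.ne'] using hxs
      · simp [smul_smul, hr.ne']
    · rintro ⟨_, ⟨ω, hω, rfl⟩, rfl⟩
      exact ⟨hω, by simp [norm_smul, abs_of_pos hr]⟩
  rw [h1, Measure.hausdorffMeasure_smul₀ (by positivity) hr.ne', ENNReal.smul_def, smul_eq_mul,
    smul_eq_mul]
  congr 1
  rw [NNReal.rpow_natCast, ENNReal.ofReal_pow hr.le, ENNReal.coe_pow]
  congr 1
  exact Real.enorm_of_nonneg hr.le

lemma integral_sphere_hausdorffMeasure {r : ℝ} (hr : 0 < r) :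
    ∫ x in sphere (0 : EuclideanSpace ℝ (Fin (k + 1))) r, u x ∂μH[(k : ℝ)] =
      r ^ k * ∫ ω : sphere (0 : EuclideanSpace ℝ (Fin (k + 1))) 1, u (r • ω.1) ∂μH[(k : ℝ)] := by
  have hemb : MeasurableEmbedding
      fun ω : sphere (0 : EuclideanSpace ℝ (Fin (k + 1))) 1 => r • ω.1 :=
    (Homeomorph.smulOfNeZero r hr.ne').measurableEmbedding.comp
      (MeasurableEmbedding.subtype_coe isClosed_sphere.measurableSet)
  rw [hausdorffMeasure_restrict_sphere hr, integral_smul_measure, hemb.integral_map,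
    ENNReal.toReal_ofReal (by positivity), smul_eq_mul]

lemma integrableOn_integral_sphere (hu : Integrable u) (hu0 : ∀ x, 0 ≤ u x) :
    IntegrableOn (fun r => ∫ x in sphere (0 : EuclideanSpace ℝ (Fin (k + 1))) r, u x ∂μH[(k : ℝ)])
      (Ioi 0) ∧
    ∀ᵐ r ∂(volume.restrict (Ioi (0 : ℝ))),
      r ^ k * ∫ ω : sphere (0 : EuclideanSpace ℝ (Fin (k + 1))) 1, u (r • ω.1)
        ∂(volume : Measure (EuclideanSpace ℝ (Fin (k + 1)))).toSphere ≤
      ∫ x in sphere (0 : EuclideanSpace ℝ (Fin (k + 1))) r, u x ∂μH[(k : ℝ)] := by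
  obtain ⟨C, hC⟩ := exists_hausdorffMeasure_sphere_le_toSphere k
  have hle := toSphere_le_hausdorffMeasure_sphere k
  set τ := (volume : Measure (EuclideanSpace ℝ (Fin (k + 1)))).toSphere
  set ν : Measure (sphere (0 : EuclideanSpace ℝ (Fin (k + 1))) 1) := μH[(k : ℝ)]
  have : IsFiniteMeasure ν := isFiniteMeasure_of_le _ hC
  have hac : ν ≪ τ := (Measure.absolutelyContinuous_of_le hC).trans
    Measure.smul_absolutelyContinuous
  have hpol := integrable_polar hu
  have hslice := hpol.prod_left_ae
  have hbound : ∀ᵐ r : Ioi (0 : ℝ) ∂(Measure.volumeIoiPow k),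
      ∫ ω, u (r.1 • ω.1) ∂τ ≤ ∫ ω, u (r.1 • ω.1) ∂ν ∧
      ∫ ω, u (r.1 • ω.1) ∂ν ≤ C * ∫ ω, u (r.1 • ω.1) ∂τ := by
    filter_upwards [hslice] with r hr
    have hr' : Integrable (fun ω : sphere (0 : EuclideanSpace ℝ (Fin (k + 1))) 1 =>
      u (r.1 • ω.1)) (C • τ) := hr.smul_measure_nnreal
    refine ⟨integral_mono_measure hle (Eventually.of_forall fun ω => hu0 _)
      (hr'.mono_measure hC), ?_⟩
    refine (integral_mono_measure hC (Eventually.of_forall fun ω => hu0 _) hr').trans_eq ?_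
    rw [integral_smul_nnreal_measure, NNReal.smul_def, smul_eq_mul]
  have hmeas : AEStronglyMeasurable (fun r : Ioi (0 : ℝ) => ∫ ω, u (r.1 • ω.1) ∂ν)
      (Measure.volumeIoiPow k) :=
    ((hpol.aestronglyMeasurable.mono_ac (hac.prod .rfl)).prod_swap).integral_prod_right'
  constructor
  · have h1 : Integrable (fun r : Ioi (0 : ℝ) => ∫ ω, u (r.1 • ω.1) ∂ν)
        (Measure.volumeIoiPow k) := by
      refine Integrable.mono' (hpol.integral_prod_right.const_mul (C : ℝ)) hmeas ?_
      filter_upwards [hbound] with r hr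
      rw [Real.norm_of_nonneg (integral_nonneg fun ω => hu0 _)]
      exact hr.2
    refine ((integrable_volumeIoiPow_iff (F := fun r => ∫ ω, u (r • ω.1) ∂ν)).1 h1).congr_fun
      (fun r hr => (integral_sphere_hausdorffMeasure hr).symm) measurableSet_Ioi
  · filter_upwards [ae_restrict_Ioi_of_ae_volumeIoiPow (P := fun r =>
      ∫ ω, u (r • ω.1) ∂τ ≤ ∫ ω, u (r • ω.1) ∂ν) (hbound.mono fun r hr => hr.1),
      ae_restrict_mem measurableSet_Ioi] with r hr hr0
    rw [integral_sphere_hausdorffMeasure hr0]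
    exact mul_le_mul_of_nonneg_left hr (pow_nonneg (le_of_lt hr0) k)

end Polar

lemma exists_radial_cutoff {E : Type*} [NormedAddCommGroup E] [InnerProductSpace ℝ E]
    [ProperSpace E] {ρ σ : ℝ} (hρ : 0 < ρ) (hρσ : ρ < σ) {ψ : ℝ → ℝ} (hψ : Continuous ψ)
    (hψ0 : ∀ r, 0 ≤ ψ r)
    (hsupp : ∃ a b, ρ < a ∧ b < σ ∧ ∀ r ∉ Icc a b, ψ r = 0)
    (hint : ∫ r in Ioo ρ σ, ψ r = 1) :
    ∃ η : E → ℝ, ContDiff ℝ 1 η ∧ HasCompactSupport η ∧ tsupport η ⊆ ball 0 σ ∧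
      (∀ x, 0 ≤ η x) ∧ (∀ x ∈ ball 0 ρ, η x = 1) ∧ ∀ x, ‖fderiv ℝ η x‖ ≤ ψ ‖x‖ := by
  obtain ⟨a, b, ha, hb, hab⟩ := hsupp
  set φ : ℝ → ℝ := fun r => ∫ t in r..σ, ψ t with hφ
  have hderiv (r : ℝ) : HasDerivAt φ (-ψ r) r :=
    intervalIntegral.integral_hasDerivAt_left (hψ.intervalIntegrable _ _)
      hψ.aestronglyMeasurable.stronglyMeasurableAtFilter hψ.continuousAt
  have hφ1 : ∀ r < a, φ r = 1 := by
    intro r hr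
    have h1 : φ r = (∫ t in r..ρ, ψ t) + ∫ t in ρ..σ, ψ t :=
      (intervalIntegral.integral_add_adjacent_intervals (hψ.intervalIntegrable _ _)
        (hψ.intervalIntegrable _ _)).symm
    have h2 : ∫ t in r..ρ, ψ t = 0 := by
      refine (intervalIntegral.integral_congr (g := fun _ => 0) fun t ht => ?_).trans (by simp)
      have : t < a := ht.2.trans_lt (max_lt hr ha)
      exact hab t fun h => this.not_ge h.1
    rw [h1, h2, zero_add, intervalIntegral.integral_of_le hρσ.le,
      integral_Ioc_eq_integral_Ioo, hint]
  have hφ0 : ∀ r, b < r → φ r = 0 := by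
    intro r hr
    refine (intervalIntegral.integral_congr (g := fun _ => 0) fun t ht => ?_).trans (by simp)
    have : b < t := (lt_min hr hb).trans_le ht.1
    exact hab t fun h => this.not_ge h.2
  have hφC : ContDiff ℝ 1 φ := by
    rw [contDiff_one_iff_deriv]
    refine ⟨fun r => (hderiv r).differentiableAt, ?_⟩
    rw [show deriv φ = fun r => -ψ r from funext fun r => (hderiv r).deriv]
    exact hψ.neg
  have hφnonneg (r : ℝ) : 0 ≤ φ r := by
    rcases le_or_gt r σ with h | h
    · exact intervalIntegral.integral_nonneg h fun t _ => hψ0 t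
    · exact (hφ0 r (hb.trans h)).ge
  have hzero : ∀ x : E, x ∉ closedBall (0 : E) b → φ ‖x‖ = 0 := fun x hx =>
    hφ0 _ (by simpa using hx)
  have hone : ∀ x ∈ ball (0 : E) ρ, φ ‖x‖ = 1 := fun x hx =>
    hφ1 _ ((by simpa using hx : ‖x‖ < ρ).trans ha)
  have hloc : (fun x : E => φ ‖x‖) =ᶠ[𝓝 0] fun _ => 1 :=
    eventually_of_mem (ball_mem_nhds 0 hρ) hone
  refine ⟨fun x => φ ‖x‖, ?_, HasCompactSupport.intro (isCompact_closedBall 0 b) hzero, ?_,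
    fun x => hφnonneg _, hone, ?_⟩
  · rw [contDiff_iff_contDiffAt]
    intro x
    by_cases hx : x = 0
    · subst hx
      exact contDiffAt_const.congr_of_eventuallyEq hloc
    · exact hφC.contDiffAt.comp x (contDiffAt_norm ℝ hx)
  · refine (closure_minimal (fun x hx => ?_) isClosed_closedBall).trans
      (closedBall_subset_ball (x := (0 : E)) hb)
    by_contra h
    exact hx (hzero x h)
  · intro x
    by_cases hx : x = 0
    · subst hx
      rw [hloc.fderiv_eq]
      simpa using hψ0 0
    · have hd : HasFDerivAt (fun x : E => ‖x‖) (fderiv ℝ (fun x : E => ‖x‖) x) x :=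
        ((contDiffAt_norm ℝ hx (n := 1)).differentiableAt (by simp)).hasFDerivAt
      have h1 : HasFDerivAt (fun x : E => φ ‖x‖) _ x := (hderiv ‖x‖).comp_hasFDerivAt x hd
      rw [h1.fderiv, norm_smul, norm_neg, Real.norm_of_nonneg (hψ0 _)]
      have h2 : ‖fderiv ℝ (fun x : E => ‖x‖) x‖ ≤ 1 := by
        simpa using norm_fderiv_le_of_lipschitz ℝ (lipschitzWith_one_norm (E := E)) (x₀ := x)
      exact mul_le_of_le_one_right (hψ0 _) h2

lemma integral_mul_radial_le {k : ℕ} {u : EuclideanSpace ℝ (Fin (k + 1)) → ℝ} (hu : Integrable u)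
    (hu0 : ∀ x, 0 ≤ u x) {g : ℝ → ℝ} (hg : Continuous g) (hg0 : ∀ r, 0 ≤ g r) {M : ℝ}
    (hM : ∀ r, g r ≤ M) :
    ∫ x, u x * g ‖x‖ ≤ ∫ r in Ioi (0 : ℝ),
      (∫ x in sphere (0 : EuclideanSpace ℝ (Fin (k + 1))) r, u x ∂μH[(k : ℝ)]) * g r := by
  have hug : Integrable fun x => u x * g ‖x‖ :=
    hu.mul_bdd (c := M) (hg.comp continuous_norm).aestronglyMeasurable
      (Eventually.of_forall fun x => by rw [Real.norm_of_nonneg (hg0 _)]; exact hM _)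
  obtain ⟨hf, hle⟩ := integrableOn_integral_sphere hu hu0
  have hfg := Integrable.mul_bdd (c := M) hf hg.aestronglyMeasurable
    (Eventually.of_forall fun r => by rw [Real.norm_of_nonneg (hg0 _)]; exact hM _)
  rw [integral_polar hug]
  refine integral_mono_of_nonneg ?_ hfg ?_
  · filter_upwards [ae_restrict_mem measurableSet_Ioi] with r hr
    exact mul_nonneg (pow_nonneg (le_of_lt hr) k)
      (integral_nonneg fun ω => mul_nonneg (hu0 _) (hg0 _))
  · filter_upwards [hle, ae_restrict_mem measurableSet_Ioi] with r hr hr0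
    have hn (ω : sphere (0 : EuclideanSpace ℝ (Fin (k + 1))) 1) : ‖r • ω.1‖ = r := by
      simp [norm_smul, abs_of_pos (show 0 < r from hr0)]
    simp only [hn, integral_mul_const, ← mul_assoc]
    exact mul_le_mul_of_nonneg_right hr (hg0 r)

end

/-- **Optimized cut-off lemma (Lemma 2.1).** For `0 < ρ < σ`, `v ∈ L¹(B_σ)`, `s > 1` and
`δ ∈ (0,1]`, the infimum `J(ρ,σ,v)` of `∫_{B_σ} |v| |∇η|^s` over all `η ∈ C₀¹(B_σ)`,
`η ≥ 0`, `η = 1` on `B_ρ`, satisfies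
`J(ρ,σ,v) ≤ (σ−ρ)^{−(s−1+1/δ)} (∫_ρ^σ (∫_{S_r} |v| dH^{n−1})^δ dr)^{1/δ}`. -/
theorem optimized_cutoff_lemma
    (n : ℕ) (hn : 2 ≤ n) (ρ σ : ℝ) (hρ : 0 < ρ) (hρσ : ρ < σ)
    (v : EuclideanSpace ℝ (Fin n) → ℝ)
    (hv : IntegrableOn v (ball (0 : EuclideanSpace ℝ (Fin n)) σ))
    (s : ℝ) (hs : 1 < s) (δ : ℝ) (hδ0 : 0 < δ) (hδ1 : δ ≤ 1) :
    sInf {I : ℝ | ∃ η : EuclideanSpace ℝ (Fin n) → ℝ,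
        ContDiff ℝ 1 η ∧ HasCompactSupport η ∧
        tsupport η ⊆ ball (0 : EuclideanSpace ℝ (Fin n)) σ ∧
        (∀ x, 0 ≤ η x) ∧ (∀ x ∈ ball (0 : EuclideanSpace ℝ (Fin n)) ρ, η x = 1) ∧
        I = ∫ x in ball (0 : EuclideanSpace ℝ (Fin n)) σ, |v x| * ‖fderiv ℝ η x‖ ^ s}
      ≤ (σ - ρ) ^ (-(s - 1 + 1 / δ)) *
        (∫ r in Ioo ρ σ,
          (∫ x in sphere (0 : EuclideanSpace ℝ (Fin n)) r, |v x| ∂μH[(n : ℝ) - 1]) ^ δ)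
          ^ (1 / δ) := by
  obtain ⟨k, rfl⟩ : ∃ k, n = k + 1 := ⟨n - 1, by lia⟩
  rw [show ((k + 1 : ℕ) : ℝ) - 1 = k by push_cast; ring]
  refine le_of_forall_gt_imp_ge_of_dense fun κ hκ => ?_
  set u : EuclideanSpace ℝ (Fin (k + 1)) → ℝ := (ball 0 σ).indicator fun x => |v x| with hu_def
  have hu : Integrable u := IntegrableOn.integrable_indicator hv.abs measurableSet_ball
  have hu0 (x) : 0 ≤ u x := indicator_nonneg (fun _ _ => abs_nonneg _) x
  have hsphere : ∀ r ∈ Ioo ρ σ,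
      ∫ x in sphere (0 : EuclideanSpace ℝ (Fin (k + 1))) r, u x ∂μH[(k : ℝ)] =
        ∫ x in sphere (0 : EuclideanSpace ℝ (Fin (k + 1))) r, |v x| ∂μH[(k : ℝ)] := by
    intro r hr
    refine setIntegral_congr_fun isClosed_sphere.measurableSet fun x hx => ?_
    exact indicator_of_mem (sphere_subset_ball hr.2 hx) _
  have hf : IntegrableOn (fun r => ∫ x in sphere (0 : EuclideanSpace ℝ (Fin (k + 1))) r, |v x|
      ∂μH[(k : ℝ)]) (Ioo ρ σ) :=
    ((integrableOn_integral_sphere hu hu0).1.mono_set fun r hr => hρ.trans hr.1).congr_fun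
      hsphere measurableSet_Ioo
  obtain ⟨ψ, hψ, hψ0, hsupp, hint, hle⟩ := exists_optimized_weight hρσ
    (fun r => integral_nonneg fun x => abs_nonneg (v x)) hf hs hδ0 hδ1 hκ
  obtain ⟨η, hη, hηc, hηs, hη0, hη1, hηd⟩ :=
    exists_radial_cutoff (E := EuclideanSpace ℝ (Fin (k + 1))) hρ hρσ hψ hψ0 hsupp hint
  obtain ⟨a, b, ha, hb, hab⟩ := hsupp
  have hψc : HasCompactSupport ψ := HasCompactSupport.intro isCompact_Icc hab
  obtain ⟨M, hM⟩ := hψc.exists_bound_of_continuous hψ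
  have hM' (r : ℝ) : ψ r ≤ M := (le_abs_self _).trans (hM r)
  have hs0 : 0 < s := by linarith
  have hψs : Continuous fun r => ψ r ^ s := hψ.rpow_const fun _ => Or.inr hs0.le
  have hψs0 (r : ℝ) : 0 ≤ ψ r ^ s := Real.rpow_nonneg (hψ0 r) s
  have hψsM (r : ℝ) : ψ r ^ s ≤ M ^ s := Real.rpow_le_rpow (hψ0 r) (hM' r) hs0.le
  have hψsz : ∀ r ∉ Ioo ρ σ, ψ r ^ s = 0 := fun r hr => by
    rw [hab r fun h => hr ⟨ha.trans_le h.1, h.2.trans_lt hb⟩, Real.zero_rpow hs0.ne']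
  refine csInf_le_of_le ⟨0, ?_⟩ ⟨η, hη, hηc, hηs, hη0, hη1, rfl⟩ ?_
  · rintro _ ⟨_, -, -, -, -, -, rfl⟩
    exact integral_nonneg fun x => mul_nonneg (abs_nonneg _) (Real.rpow_nonneg (norm_nonneg _) _)
  calc ∫ x in ball (0 : EuclideanSpace ℝ (Fin (k + 1))) σ, |v x| * ‖fderiv ℝ η x‖ ^ s
      ≤ ∫ x, u x * ψ ‖x‖ ^ s := by
        rw [← integral_indicator measurableSet_ball]
        refine integral_mono_of_nonneg (Filter.Eventually.of_forall fun x => ?_)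
          (hu.mul_bdd (c := M ^ s) (hψs.comp continuous_norm).aestronglyMeasurable
            (Filter.Eventually.of_forall fun x => ?_)) (Filter.Eventually.of_forall fun x => ?_)
        · exact indicator_nonneg (fun _ _ => mul_nonneg (abs_nonneg _)
            (Real.rpow_nonneg (norm_nonneg _) _)) x
        · rw [Real.norm_of_nonneg (hψs0 _)]
          exact hψsM _
        · simp only [hu_def, ← indicator_mul_left _ _ fun x => ψ ‖x‖ ^ s]
          refine indicator_le_indicator (mul_le_mul_of_nonneg_left ?_ (abs_nonneg _))
          exact Real.rpow_le_rpow (norm_nonneg _) (hηd x) hs0.le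
    _ ≤ ∫ r in Ioi (0 : ℝ), (∫ x in sphere (0 : EuclideanSpace ℝ (Fin (k + 1))) r, u x
          ∂μH[(k : ℝ)]) * ψ r ^ s := integral_mul_radial_le hu hu0 hψs hψs0 hψsM
    _ = ∫ r in Ioo ρ σ, (∫ x in sphere (0 : EuclideanSpace ℝ (Fin (k + 1))) r, u x
          ∂μH[(k : ℝ)]) * ψ r ^ s :=
        (setIntegral_eq_of_subset_of_forall_sdiff_eq_zero measurableSet_Ioi
          (fun r hr => hρ.trans hr.1) fun r hr => by rw [hψsz r hr.2, mul_zero])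
    _ = ∫ r in Ioo ρ σ, (∫ x in sphere (0 : EuclideanSpace ℝ (Fin (k + 1))) r, |v x|
          ∂μH[(k : ℝ)]) * ψ r ^ s :=
        setIntegral_congr_fun measurableSet_Ioo fun r hr => by simp only [hsphere r hr]
    _ ≤ κ := hle
end
end

section
/- Let 0 < ρ < σ < ∞, s > 1, ε > 0, and let b : (ρ,σ) → [ε,∞) be an integrable function bounded below by ε. Then the infimum of ∫_ρ^σ |η'(r)|^s b(r) dr over all η ∈ W^{1,∞}(ρ,σ) with η(ρ) = 1 and η(σ) = 0 equals ( ∫_ρ^σ b(r)^{−1/(s−1)} dr )^{−(s−1)}; moreover the infimum is attained by η̃(r) := 1 − ( ∫_ρ^σ b^{−1/(s−1)} )^{−1} ∫_ρ^r b^{−1/(s−1)}. -/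
open MeasureTheory Set
open scoped ENNReal NNReal Topology

noncomputable section

/-- A power function lies above its tangent line at `c`. -/
lemma rpow_tangent_le {s c x : ℝ} (hs : 1 ≤ s) (hc : 0 < c) (hx : 0 ≤ x) :
    s * c ^ (s - 1) * x - (s - 1) * c ^ s ≤ x ^ s := by
  have h := one_add_mul_self_le_rpow_one_add (s := x / c - 1)
    (by linarith [div_nonneg hx hc.le]) hs
  rw [add_sub_cancel, Real.div_rpow hx hc.le, le_div_iff₀ (by positivity)] at h
  refine le_trans (le_of_eq ?_) h
  rw [Real.rpow_sub_one hc.ne']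
  field_simp
  ring

section Weight

variable {ρ σ s ε : ℝ} {b : ℝ → ℝ}

lemma rpow_neg_one_div_mul_rpow {β : ℝ} (hs : 1 < s) (hβ : 0 < β) :
    β * (β ^ (-(1 / (s - 1)))) ^ (s - 1) = 1 := by
  have hs' : s - 1 ≠ 0 := by linarith
  rw [← Real.rpow_mul hβ.le, neg_mul, one_div, inv_mul_cancel₀ hs', Real.rpow_neg_one,
    mul_inv_cancel₀ hβ.ne']

lemma weight_mul_div_rpow_sub_one {β A : ℝ} (hs : 1 < s) (hβ : 0 < β) (hA : 0 < A) :
    β * (β ^ (-(1 / (s - 1))) / A) ^ (s - 1) = A ^ (-(s - 1)) := by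
  rw [Real.div_rpow (by positivity) hA.le, ← mul_div_assoc, rpow_neg_one_div_mul_rpow hs hβ,
    Real.rpow_neg hA.le, one_div]

lemma weight_mul_div_rpow {β A : ℝ} (hs : 1 < s) (hβ : 0 < β) (hA : 0 < A) :
    (β ^ (-(1 / (s - 1))) / A) ^ s * β = A ^ (-(s - 1)) / A * β ^ (-(1 / (s - 1))) := by
  have hc : 0 < β ^ (-(1 / (s - 1))) / A := by positivity
  have h := weight_mul_div_rpow_sub_one hs hβ hA
  rw [Real.rpow_sub_one hc.ne'] at h
  rw [← h]
  field_simp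

lemma rpow_weight_mem_Ioc (hs : 1 < s) (hε : 0 < ε) (hb_lb : ∀ r ∈ Ioo ρ σ, ε ≤ b r)
    {r : ℝ} (hr : r ∈ Ioo ρ σ) :
    b r ^ (-(1 / (s - 1))) ∈ Ioc 0 (ε ^ (-(1 / (s - 1)))) :=
  ⟨Real.rpow_pos_of_pos (hε.trans_le (hb_lb r hr)) _,
    Real.rpow_le_rpow_of_nonpos hε (hb_lb r hr)
      (neg_nonpos.2 (one_div_nonneg.2 (sub_nonneg.2 hs.le)))⟩

lemma integrableOn_rpow_weight (hs : 1 < s) (hε : 0 < ε) (hb_int : IntegrableOn b (Ioo ρ σ))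
    (hb_lb : ∀ r ∈ Ioo ρ σ, ε ≤ b r) :
    IntegrableOn (fun r => b r ^ (-(1 / (s - 1)))) (Ioo ρ σ) := by
  refine Integrable.of_bound (C := ε ^ (-(1 / (s - 1))))
    (hb_int.aemeasurable.pow_const _).aestronglyMeasurable ?_
  filter_upwards [ae_restrict_mem measurableSet_Ioo] with r hr
  obtain ⟨h0, h1⟩ := rpow_weight_mem_Ioc hs hε hb_lb hr
  rwa [Real.norm_of_nonneg h0.le]

lemma intervalIntegrable_rpow_weight (hρσ : ρ ≤ σ) (hs : 1 < s) (hε : 0 < ε)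
    (hb_int : IntegrableOn b (Ioo ρ σ)) (hb_lb : ∀ r ∈ Ioo ρ σ, ε ≤ b r) :
    IntervalIntegrable (fun r => b r ^ (-(1 / (s - 1)))) volume ρ σ :=
  (intervalIntegrable_iff_integrableOn_Ioo_of_le hρσ).2
    (integrableOn_rpow_weight hs hε hb_int hb_lb)

lemma integral_rpow_weight_pos (hρσ : ρ < σ) (hs : 1 < s) (hε : 0 < ε)
    (hb_int : IntegrableOn b (Ioo ρ σ)) (hb_lb : ∀ r ∈ Ioo ρ σ, ε ≤ b r) :
    0 < ∫ r in ρ..σ, b r ^ (-(1 / (s - 1))) :=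
  intervalIntegral.intervalIntegral_pos_of_pos_on
    (intervalIntegrable_rpow_weight hρσ.le hs hε hb_int hb_lb)
    (fun _ hr => (rpow_weight_mem_Ioc hs hε hb_lb hr).1) hρσ

lemma lipschitzOnWith_integral_of_norm_le {f : ℝ → ℝ} {C : ℝ≥0} (hρσ : ρ ≤ σ)
    (hf : IntervalIntegrable f volume ρ σ) (hC : ∀ r ∈ Ioo ρ σ, ‖f r‖ ≤ C) :
    LipschitzOnWith C (fun r => ∫ t in ρ..r, f t) (Icc ρ σ) := by
  refine LipschitzOnWith.of_dist_le_mul fun x hx y hy => ?_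
  have hint : ∀ z ∈ Icc ρ σ, IntervalIntegrable f volume ρ z := fun z hz =>
    hf.mono_set (by rw [uIcc_of_le hz.1, uIcc_of_le hρσ]; exact Icc_subset_Icc_right hz.2)
  rw [Real.dist_eq, Real.dist_eq, intervalIntegral.integral_interval_sub_left (hint x hx) (hint y hy),
    ← Real.norm_eq_abs]
  refine intervalIntegral.norm_integral_le_of_norm_le_const_ae ?_
  filter_upwards [(measure_eq_zero_iff_ae_notMem (μ := volume)).1 (measure_singleton σ)]
    with t hne ht
  rw [uIoc, mem_Ioc] at ht
  exact hC t ⟨(le_min hy.1 hx.1).trans_lt ht.1, lt_of_le_of_ne (ht.2.trans (max_le hy.2 hx.2)) hne⟩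

lemma integral_rpow_weight_le_energy (hρσ : ρ < σ) (hs : 1 < s) (hε : 0 < ε)
    (hb_int : IntegrableOn b (Ioo ρ σ)) (hb_lb : ∀ r ∈ Ioo ρ σ, ε ≤ b r)
    {η : ℝ → ℝ} {K : ℝ≥0} (hη : LipschitzOnWith K η (Icc ρ σ)) (h1 : η ρ = 1) (h0 : η σ = 0) :
    (∫ r in ρ..σ, b r ^ (-(1 / (s - 1)))) ^ (-(s - 1))
      ≤ ∫ r in Ioo ρ σ, |deriv η r| ^ s * b r := by
  have hA := integral_rpow_weight_pos hρσ hs hε hb_int hb_lb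
  have hw := integrableOn_rpow_weight hs hε hb_int hb_lb
  have hAw : ∫ r in Ioo ρ σ, b r ^ (-(1 / (s - 1))) = ∫ r in ρ..σ, b r ^ (-(1 / (s - 1))) := by
    rw [intervalIntegral.integral_of_le hρσ.le, integral_Ioc_eq_integral_Ioo]
  set A := ∫ r in ρ..σ, b r ^ (-(1 / (s - 1)))
  have hbound : ∀ r ∈ Ioo ρ σ, |deriv η r| ≤ K := fun r hr =>
    norm_deriv_le_of_lipschitzOn (Icc_mem_nhds hr.1 hr.2) hη
  have hd : IntegrableOn (fun r => |deriv η r|) (Ioo ρ σ) := by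
    refine Integrable.of_bound (C := K) (measurable_deriv η).abs.aestronglyMeasurable ?_
    filter_upwards [ae_restrict_mem measurableSet_Ioo] with r hr
    simpa using hbound r hr
  have henergy : IntegrableOn (fun r => |deriv η r| ^ s * b r) (Ioo ρ σ) := by
    refine Integrable.bdd_mul (c := (K : ℝ) ^ s) hb_int
      ((measurable_deriv η).abs.pow_const s).aestronglyMeasurable ?_
    filter_upwards [ae_restrict_mem measurableSet_Ioo] with r hr
    rw [Real.norm_of_nonneg (by positivity)]
    exact Real.rpow_le_rpow (abs_nonneg _) (hbound r hr) (by linarith)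
  have hone : 1 ≤ ∫ r in Ioo ρ σ, |deriv η r| := by
    have hac : AbsolutelyContinuousOnInterval η ρ σ :=
      LipschitzOnWith.absolutelyContinuousOnInterval (by rwa [uIcc_of_le hρσ.le])
    have h := hac.integral_deriv_eq_sub
    rw [h1, h0, intervalIntegral.integral_of_le hρσ.le, integral_Ioc_eq_integral_Ioo] at h
    have h' := abs_integral_le_integral_abs (f := deriv η) (μ := volume.restrict (Ioo ρ σ))
    rw [h] at h'
    simpa using h'
  calc A ^ (-(s - 1))
      ≤ s * A ^ (-(s - 1)) * (∫ r in Ioo ρ σ, |deriv η r|)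
          - (s - 1) * (A ^ (-(s - 1)) / A) * ∫ r in Ioo ρ σ, b r ^ (-(1 / (s - 1))) := by
        rw [hAw, mul_assoc (s - 1), div_mul_cancel₀ _ hA.ne']
        have := mul_le_mul_of_nonneg_left hone
          (show 0 ≤ s * A ^ (-(s - 1)) by positivity)
        linarith
    _ = ∫ r in Ioo ρ σ, (s * A ^ (-(s - 1)) * |deriv η r|
          - (s - 1) * (A ^ (-(s - 1)) / A) * b r ^ (-(1 / (s - 1)))) := by
        rw [integral_sub (hd.const_mul _) (hw.const_mul _), integral_const_mul,
          integral_const_mul]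
    _ ≤ ∫ r in Ioo ρ σ, |deriv η r| ^ s * b r := by
        refine setIntegral_mono_on ((hd.const_mul _).sub (hw.const_mul _)) henergy
          measurableSet_Ioo fun r hr => ?_
        have hβ : 0 < b r := hε.trans_le (hb_lb r hr)
        have h := mul_le_mul_of_nonneg_right
          (rpow_tangent_le hs.le (c := b r ^ (-(1 / (s - 1))) / A) (by positivity)
            (abs_nonneg (deriv η r))) hβ.le
        refine le_trans (le_of_eq ?_) h
        linear_combination (s - 1) * weight_mul_div_rpow hs hβ hA
          - s * |deriv η r| * weight_mul_div_rpow_sub_one hs hβ hA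

lemma energy_minimizer_eq (hρσ : ρ < σ) (hs : 1 < s) (hε : 0 < ε)
    (hb_int : IntegrableOn b (Ioo ρ σ)) (hb_lb : ∀ r ∈ Ioo ρ σ, ε ≤ b r) :
    (∫ r in Ioo ρ σ,
        |deriv (fun r' => 1 - (∫ t in ρ..σ, b t ^ (-(1 / (s - 1))))⁻¹ *
          ∫ t in ρ..r', b t ^ (-(1 / (s - 1)))) r| ^ s * b r)
      = (∫ r in ρ..σ, b r ^ (-(1 / (s - 1)))) ^ (-(s - 1)) := by
  have hA := integral_rpow_weight_pos hρσ hs hε hb_int hb_lb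
  have hw := intervalIntegrable_rpow_weight hρσ.le hs hε hb_int hb_lb
  have hAw : ∫ r in Ioo ρ σ, b r ^ (-(1 / (s - 1))) = ∫ r in ρ..σ, b r ^ (-(1 / (s - 1))) := by
    rw [intervalIntegral.integral_of_le hρσ.le, integral_Ioc_eq_integral_Ioo]
  set A := ∫ r in ρ..σ, b r ^ (-(1 / (s - 1)))
  calc _ = ∫ r in Ioo ρ σ, A ^ (-(s - 1)) / A * b r ^ (-(1 / (s - 1))) := by
        refine setIntegral_congr_ae measurableSet_Ioo ?_
        filter_upwards [hw.ae_hasDerivAt_integral] with r hr hmem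
        have hβ : 0 < b r := hε.trans_le (hb_lb r hmem)
        have hderiv := ((hr (Ioo_subset_Icc_self.trans Icc_subset_uIcc hmem) ρ
          left_mem_uIcc).const_mul A⁻¹).const_sub 1
        rw [hderiv.deriv, abs_neg, abs_of_nonneg (by positivity), inv_mul_eq_div,
          weight_mul_div_rpow hs hβ hA]
    _ = A ^ (-(s - 1)) := by
        rw [integral_const_mul, hAw, div_mul_cancel₀ _ hA.ne']

lemma exists_lipschitzOnWith_minimizer (hρσ : ρ < σ) (hs : 1 < s) (hε : 0 < ε)
    (hb_int : IntegrableOn b (Ioo ρ σ)) (hb_lb : ∀ r ∈ Ioo ρ σ, ε ≤ b r) (a : ℝ) :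
    ∃ K : ℝ≥0, LipschitzOnWith K
      (fun r => 1 - a * ∫ t in ρ..r, b t ^ (-(1 / (s - 1)))) (Icc ρ σ) := by
  have h := lipschitzOnWith_integral_of_norm_le (C := ⟨ε ^ (-(1 / (s - 1))), by positivity⟩)
    hρσ.le (intervalIntegrable_rpow_weight hρσ.le hs hε hb_int hb_lb) fun r hr => by
      obtain ⟨h0, h1⟩ := rpow_weight_mem_Ioc hs hε hb_lb hr
      rwa [Real.norm_of_nonneg h0.le]
  have haff : LipschitzWith ‖a‖₊ fun x : ℝ => 1 - a * x :=
    LipschitzWith.of_dist_le_mul fun x y => by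
      rw [dist_sub_left, dist_eq_norm, ← mul_sub, norm_mul, dist_eq_norm, coe_nnnorm]
  exact ⟨_, haff.comp_lipschitzOnWith h⟩

end Weight

/-- **Explicit solution of the one-dimensional weighted minimization problem.**
For `0 < ρ < σ`, `s > 1` and an integrable weight `b ≥ ε > 0` on `(ρ,σ)`, the infimum of
`∫_ρ^σ |η'(r)|^s b(r) dr` over all Lipschitz `η` on `[ρ,σ]` with `η(ρ) = 1`, `η(σ) = 0`
equals `(∫_ρ^σ b^{−1/(s−1)})^{−(s−1)}`, and is attained by
`η̃(r) = 1 − (∫_ρ^σ b^{−1/(s−1)})⁻¹ ∫_ρ^r b^{−1/(s−1)}`. -/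
theorem one_dimensional_weighted_minimization
    (ρ σ s ε : ℝ) (hρ : 0 < ρ) (hρσ : ρ < σ) (hs : 1 < s) (hε : 0 < ε)
    (b : ℝ → ℝ) (hb_int : IntegrableOn b (Ioo ρ σ))
    (hb_lb : ∀ r ∈ Ioo ρ σ, ε ≤ b r) :
    (∀ η : ℝ → ℝ, (∃ K : ℝ≥0, LipschitzOnWith K η (Icc ρ σ)) →
      η ρ = 1 → η σ = 0 →
      (∫ r in ρ..σ, b r ^ (-(1 / (s - 1)))) ^ (-(s - 1))
        ≤ ∫ r in Ioo ρ σ, |deriv η r| ^ s * b r) ∧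
    (∃ K : ℝ≥0, LipschitzOnWith K
      (fun r => 1 - (∫ t in ρ..σ, b t ^ (-(1 / (s - 1))))⁻¹ *
        ∫ t in ρ..r, b t ^ (-(1 / (s - 1)))) (Icc ρ σ)) ∧
    (1 - (∫ t in ρ..σ, b t ^ (-(1 / (s - 1))))⁻¹ *
        ∫ t in ρ..ρ, b t ^ (-(1 / (s - 1)))) = 1 ∧
    (1 - (∫ t in ρ..σ, b t ^ (-(1 / (s - 1))))⁻¹ *
        ∫ t in ρ..σ, b t ^ (-(1 / (s - 1)))) = 0 ∧
    (∫ r in Ioo ρ σ,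
        |deriv (fun r' => 1 - (∫ t in ρ..σ, b t ^ (-(1 / (s - 1))))⁻¹ *
          ∫ t in ρ..r', b t ^ (-(1 / (s - 1)))) r| ^ s * b r)
      = (∫ r in ρ..σ, b r ^ (-(1 / (s - 1)))) ^ (-(s - 1)) := by
  have hA := integral_rpow_weight_pos hρσ hs hε hb_int hb_lb
  refine ⟨fun η ⟨K, hη⟩ h1 h0 =>
      integral_rpow_weight_le_energy hρσ hs hε hb_int hb_lb hη h1 h0,
    exists_lipschitzOnWith_minimizer hρσ hs hε hb_int hb_lb _, ?_, ?_,
    energy_minimizer_eq hρσ hs hε hb_int hb_lb⟩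
  · simp
  · rw [inv_mul_cancel₀ hA.ne', sub_self]
end
end
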